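/- Let K be an infinite field, S = K[x_1,...,x_n], and let I ⊆ S and J ⊆ S be homogeneous ideals. Then for a general change of coordinates g ∈ GL_n(K), one has H(I ∩ g(J), d) ≤ H(Gin_lex(I) ∩ Gin_oplex(J), d) for all d ≥ 0. -/

import Mathlib

open MvPolynomial TensorProduct CategoryTheory

noncomputable section

/-- The polynomial ring `S = K[x_1,...,x_n]`, standard graded. -/
abbrev PS (K : Type) [Field K] (n : ℕ) : Type := MvPolynomial (Fin n) K

variable (K : Type) [Field K] (n : ℕ)

/-- An ideal of `S` is homogeneous if it contains all homogeneous components of its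
elements. -/
def IsHomog (I : Ideal (PS K n)) : Prop :=
  ∀ f ∈ I, ∀ d : ℕ, MvPolynomial.homogeneousComponent d f ∈ I

/-- The change of coordinates of `S` induced by `g ∈ GL_n(K)`, determined by
`g(x_i) = ∑_j g_{ji} x_j`. -/
def coordChange (g : GL (Fin n) K) : PS K n →ₐ[K] PS K n :=
  MvPolynomial.aeval (fun i => ∑ j, ((g : Matrix (Fin n) (Fin n) K) j i) • MvPolynomial.X j)

/-- A property `P` holds for a general change of coordinates `g ∈ GL_n(K)` if there is a
nonempty Zariski open subset `U ⊆ GL_n(K)` on which it holds; equivalently (as `GL_n(K)` is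
an irreducible variety over the infinite field `K`) there is a nonzero polynomial `F` in the
matrix entries such that `P g` holds whenever `F` does not vanish at `g`. -/
def generally (P : GL (Fin n) K → Prop) : Prop :=
  ∃ F : MvPolynomial (Fin n × Fin n) K, F ≠ 0 ∧
    ∀ g : GL (Fin n) K,
      MvPolynomial.eval (fun p => (g : Matrix (Fin n) (Fin n) K) p.1 p.2) F ≠ 0 → P g

/-- The Hilbert function: `H(I,d) = dim_K I_d`. -/
def hilb (I : Ideal (PS K n)) (d : ℕ) : ℕ :=
  Module.finrank K ↥(Submodule.restrictScalars K I ⊓ homogeneousSubmodule (Fin n) K d)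

/-- `a <_lex b` for the lexicographic order induced by `x_1 > x_2 > ⋯ > x_n`. -/
def lexLt (a b : Fin n →₀ ℕ) : Prop := Finsupp.Lex (· < ·) (· < ·) a b

/-- `a <_oplex b` for the (opposite) lexicographic order induced by `x_n > ⋯ > x_1`. -/
def oplexLt (a b : Fin n →₀ ℕ) : Prop := Finsupp.Lex (· > ·) (· < ·) a b

/-- The total degree of an exponent vector. -/
def expDeg (m : Fin n →₀ ℕ) : ℕ := ∑ i, m i

/-- A monomial ideal: together with any polynomial it contains each of its monomials. -/
def IsMonomialIdeal (I : Ideal (PS K n)) : Prop :=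
  ∀ f ∈ I, ∀ m ∈ f.support, MvPolynomial.monomial m (1 : K) ∈ I

/-- A lex ideal: a monomial ideal whose monomials form a lex set. -/
def IsLexIdeal (I : Ideal (PS K n)) : Prop :=
  IsMonomialIdeal K n I ∧ ∀ u v : Fin n →₀ ℕ, expDeg n u = expDeg n v →
    MvPolynomial.monomial u (1 : K) ∈ I → lexLt n u v →
      MvPolynomial.monomial v (1 : K) ∈ I

/-- An opposite lex ideal: a monomial ideal whose monomials form an opposite lex set. -/
def IsOplexIdeal (I : Ideal (PS K n)) : Prop :=
  IsMonomialIdeal K n I ∧ ∀ u v : Fin n →₀ ℕ, expDeg n u = expDeg n v →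
    MvPolynomial.monomial u (1 : K) ∈ I → oplexLt n u v →
      MvPolynomial.monomial v (1 : K) ∈ I

/-- The initial ideal `in_r(I)` of `I` with respect to a (strict) monomial order `r`:
the ideal generated by the `r`-maximal monomials of the nonzero elements of `I`. -/
def initialIdealO (r : (Fin n →₀ ℕ) → (Fin n →₀ ℕ) → Prop) (I : Ideal (PS K n)) :
    Ideal (PS K n) :=
  Ideal.span {g | ∃ f ∈ I, ∃ m ∈ f.support,
    (∀ m' ∈ f.support, m' = m ∨ r m' m) ∧ g = MvPolynomial.monomial m (1 : K)}

/-!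
Write `A = g₁(I)`, `B = g₂(J)` for coordinate changes computing the two generic initial ideals, and
let `P`, `Q` be the sets of leading exponents of `A_d` and `B_d`. Since `dim I_d = |P|` and
`dim g(J)_d = |Q|`, the inequality `dim (I ∩ g(J))_d ≤ |P ∩ Q|` amounts to
`|P ∪ Q| ≤ dim (I + g(J))_d`. Two facts give the latter.

* If `t` is a general element of the torus, then `dim (A + t(B))_d ≥ |P ∪ Q|`: choose elements of
  `A_d` and `B_d` whose leading exponents are the elements of `P` and of `Q \ P`. The square matrix
  of the coefficients at `P ∪ Q` of the chosen elements of `A_d` and of the `t`-translates of those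
  of `B_d` has a nonzero determinant, because one monomial in `t` comes only from the diagonal.
* The dimension of `(I + M(J))_d` is maximal at a general matrix `M`, for all `d` with a single
  nonvanishing condition: for the generic matrix of indeterminates, the ideal `I + M(J)` has
  finitely many minimal leading exponents, and these persist as long as finitely many leading
  coefficients do not vanish.
-/

section DegreeParts

variable {σ τ R S : Type*} [CommRing R] [CommRing S]

/-- The degree `d` part `I_d` of an ideal of a polynomial ring, as a module of forms of degree
`d` over the coefficient ring. -/
def degreePart (I : Ideal (MvPolynomial σ R)) (d : ℕ) : Submodule R (MvPolynomial σ R) :=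
  I.restrictScalars R ⊓ homogeneousSubmodule σ R d

lemma mem_degreePart {I : Ideal (MvPolynomial σ R)} {d : ℕ} {f : MvPolynomial σ R} :
    f ∈ degreePart I d ↔ f ∈ I ∧ f.IsHomogeneous d :=
  Iff.rfl

lemma degreePart_mono {I J : Ideal (MvPolynomial σ R)} (h : I ≤ J) (d : ℕ) :
    degreePart I d ≤ degreePart J d :=
  fun _ hf ↦ ⟨h hf.1, hf.2⟩

lemma degreePart_inf (I J : Ideal (MvPolynomial σ R)) (d : ℕ) :
    degreePart (I ⊓ J) d = degreePart I d ⊓ degreePart J d :=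
  inf_inf_distrib_right (I.restrictScalars R) (J.restrictScalars R) (homogeneousSubmodule σ R d)

attribute [local instance] MvPolynomial.gradedAlgebra

lemma homogeneousComponent_mem_degreePart {I : Ideal (MvPolynomial σ R)}
    (hI : I.IsHomogeneous (homogeneousSubmodule σ R)) {f : MvPolynomial σ R} (hf : f ∈ I) (d : ℕ) :
    homogeneousComponent d f ∈ degreePart I d :=
  mem_degreePart.2 ⟨homogeneousComponent_mem_of_mem hI hf d, homogeneousComponent_isHomogeneous d f⟩

lemma degreePart_sup {I J : Ideal (MvPolynomial σ R)}
    (hI : I.IsHomogeneous (homogeneousSubmodule σ R))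
    (hJ : J.IsHomogeneous (homogeneousSubmodule σ R)) (d : ℕ) :
    degreePart (I ⊔ J) d = degreePart I d ⊔ degreePart J d := by
  apply le_antisymm
  · intro f hf
    obtain ⟨hf, hfd⟩ := mem_degreePart.1 hf
    obtain ⟨a, ha, b, hb, rfl⟩ := Submodule.mem_sup.1 hf
    rw [← homogeneousComponent_eq_self hfd, map_add]
    exact add_mem (Submodule.mem_sup_left (homogeneousComponent_mem_degreePart hI ha d))
      (Submodule.mem_sup_right (homogeneousComponent_mem_degreePart hJ hb d))
  · exact sup_le (degreePart_mono le_sup_left d) (degreePart_mono le_sup_right d)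

instance finite_degreePart [Finite σ] [IsNoetherianRing R] (I : Ideal (MvPolynomial σ R)) (d : ℕ) :
    Module.Finite R (degreePart I d) := by
  have : Module.Finite R (homogeneousSubmodule σ R d) :=
    Module.Finite.iff_fg.2 (homogeneousSubmodule_fg σ R d)
  exact Module.Finite.of_injective _ (Submodule.inclusion_injective
    (inf_le_right : degreePart I d ≤ homogeneousSubmodule σ R d))

lemma isHomogeneous_map_of_preserves_degree {F : Type*}
    [FunLike F (MvPolynomial σ R) (MvPolynomial τ S)]
    [RingHomClass F (MvPolynomial σ R) (MvPolynomial τ S)] (φ : F)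
    (hφ : ∀ (d : ℕ) (f : MvPolynomial σ R), f.IsHomogeneous d → (φ f).IsHomogeneous d)
    {I : Ideal (MvPolynomial σ R)} (hI : I.IsHomogeneous (homogeneousSubmodule σ R)) :
    (I.map φ).IsHomogeneous (homogeneousSubmodule τ S) :=
  let φ' : homogeneousSubmodule σ R →+*ᵍ homogeneousSubmodule τ S := ⟨φ, fun {d f} hf ↦ hφ d f hf⟩
  (HomogeneousIdeal.map φ' ⟨I, hI⟩).isHomogeneous

end DegreeParts

section LeadingExponents

open scoped MonomialOrder

variable {σ R : Type*} (m : MonomialOrder σ)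

/-- The exponents of the leading monomials, for the monomial order `m`, of the nonzero elements
of `N`. -/
def leadingExponents [CommRing R] {M : Type*} [SetLike M (MvPolynomial σ R)] (N : M) :
    Set (σ →₀ ℕ) :=
  {e | ∃ f ∈ N, f ≠ 0 ∧ m.degree f = e}

variable {m}

lemma card_le_ncard_leadingExponents [CommRing R] [Nontrivial R]
    {N : Submodule R (MvPolynomial σ R)}
    (hfin : (leadingExponents m N).Finite) {ι : Type*} [Fintype ι]
    {v : ι → MvPolynomial σ R} (hv : LinearIndependent R v) (hvN : ∀ i, v i ∈ N) :
    Fintype.card ι ≤ (leadingExponents m N).ncard := by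
  set P := leadingExponents m N
  have := hfin.fintype
  let coeffs : MvPolynomial σ R →ₗ[R] P → R := LinearMap.pi fun e ↦ lcoeff R e.1
  have coeffs_injective : Disjoint N (LinearMap.ker coeffs) := by
    refine Submodule.disjoint_def.2 fun f hf hker ↦ by_contra fun hne ↦ ?_
    exact m.coeff_degree_ne_zero_iff.2 hne (congrFun hker ⟨m.degree f, f, hf, hne, rfl⟩)
  have hspan : Submodule.span R (Set.range v) ≤ N :=
    Submodule.span_le.2 (Set.range_subset_iff.2 hvN)
  calc Fintype.card ι ≤ Module.finrank R (P → R) :=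
        (hv.map (coeffs_injective.mono_left hspan)).fintype_card_le_finrank
    _ = P.ncard := by rw [Module.finrank_fintype_fun_eq_card, ← Nat.card_eq_fintype_card,
        Nat.card_coe_set_eq]

lemma linearIndependent_of_injective_degree [CommRing R] [IsDomain R] {ι : Type*}
    {v : ι → MvPolynomial σ R} (hv : ∀ i, v i ≠ 0)
    (hinj : Function.Injective fun i ↦ m.degree (v i)) : LinearIndependent R v := by
  classical
  rw [linearIndependent_iff']
  by_contra! ⟨s, c, hsum, i₀, hi₀, hc⟩
  obtain ⟨i, hi, hmax⟩ := (s.filter (c · ≠ 0)).exists_max_image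
    (fun i ↦ m.toSyn (m.degree (v i))) ⟨i₀, Finset.mem_filter.2 ⟨hi₀, hc⟩⟩
  obtain ⟨his, hci⟩ := Finset.mem_filter.1 hi
  have coeff_eq_zero : ∀ j ∈ s, j ≠ i → coeff (m.degree (v i)) (c j • v j) = 0 := by
    intro j hj hji
    by_cases hcj : c j = 0
    · rw [hcj, zero_smul, coeff_zero]
    · have hlt : m.degree (v j) ≺[m] m.degree (v i) :=
        lt_of_le_of_ne (hmax j (Finset.mem_filter.2 ⟨hj, hcj⟩))
          (m.toSyn.injective.ne (hinj.ne hji))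
      rw [coeff_smul, m.coeff_eq_zero_of_lt hlt, smul_zero]
  have key := congrArg (coeff (m.degree (v i))) hsum
  rw [coeff_sum, Finset.sum_eq_single_of_mem i his coeff_eq_zero, coeff_smul, coeff_zero] at key
  exact smul_ne_zero hci (m.coeff_degree_ne_zero_iff.2 (hv i)) key

lemma exists_linearIndependent_leadingExponents [CommRing R] [IsDomain R]
    (m : MonomialOrder σ) (N : Submodule R (MvPolynomial σ R)) :
    ∃ v : leadingExponents m N → N, LinearIndependent R v := by
  choose f hfN hf0 hfe using fun e : leadingExponents m N ↦ e.2
  refine ⟨fun e ↦ ⟨f e, hfN e⟩, .of_comp N.subtype ?_⟩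
  exact linearIndependent_of_injective_degree (m := m) hf0 fun d e hde ↦
    Subtype.ext (by simpa only [Function.comp_apply, Submodule.subtype_apply, hfe] using hde)

section Field

variable {k : Type*} [Field k] (m : MonomialOrder σ) (V : Submodule k (MvPolynomial σ k))
  [Module.Finite k V]

lemma finite_leadingExponents : (leadingExponents m V).Finite :=
  have ⟨_, hv⟩ := exists_linearIndependent_leadingExponents m V
  hv.finite

lemma ncard_leadingExponents_eq_finrank :
    (leadingExponents m V).ncard = Module.finrank k V := by
  have hfin := finite_leadingExponents m V
  apply le_antisymm
  · obtain ⟨v, hv⟩ := exists_linearIndependent_leadingExponents m V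
    have := hfin.fintype
    rw [← Nat.card_coe_set_eq, Nat.card_eq_fintype_card]
    exact hv.fintype_card_le_finrank
  · let b := Module.finBasis k V
    simpa using card_le_ncard_leadingExponents hfin
      (b.linearIndependent.map' V.subtype V.ker_subtype) fun i ↦ (b i).2

end Field

section Ideals

variable [CommRing R] [IsDomain R]

lemma isUpperSet_leadingExponents (I : Ideal (MvPolynomial σ R)) :
    IsUpperSet (leadingExponents m I) := by
  rintro d e hde ⟨f, hf, hf0, rfl⟩
  have hmon : monomial (e - m.degree f) (1 : R) ≠ 0 := by simp
  refine ⟨monomial (e - m.degree f) 1 * f, I.mul_mem_left _ hf, mul_ne_zero hmon hf0, ?_⟩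
  classical
  rw [m.degree_mul hmon hf0, m.degree_monomial, if_neg one_ne_zero, tsub_add_cancel_of_le hde]

end Ideals

attribute [local instance] MvPolynomial.gradedAlgebra

lemma leadingExponents_degreePart [CommRing R] {I : Ideal (MvPolynomial σ R)}
    (hI : I.IsHomogeneous (homogeneousSubmodule σ R)) (d : ℕ) :
    leadingExponents m (degreePart I d) =
      leadingExponents m I ∩ {e | e.degree = d} := by
  ext e
  constructor
  · rintro ⟨f, hf, hf0, rfl⟩
    exact ⟨⟨f, hf.1, hf0, rfl⟩,
      ((mem_degreePart.1 hf).2.degree_eq_sum_deg_support (m.degree_mem_support hf0)).symm⟩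
  · rintro ⟨⟨f, hf, hf0, rfl⟩, rfl⟩
    set d := (m.degree f).degree
    have hcoeff : coeff (m.degree f) (homogeneousComponent d f) ≠ 0 := by
      rw [coeff_homogeneousComponent, if_pos rfl]
      exact m.coeff_degree_ne_zero_iff.2 hf0
    have hle : m.degree (homogeneousComponent d f) ≼[m] m.degree f :=
      m.degree_le_degree_of_support_subset fun e he ↦ by
        rw [mem_support_iff, coeff_homogeneousComponent] at he
        exact mem_support_iff.2 (ite_ne_right_iff.1 he).2
    exact ⟨_, homogeneousComponent_mem_degreePart hI hf d, ne_zero_iff.2 ⟨_, hcoeff⟩,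
      m.toSyn.injective (hle.antisymm (m.le_degree (mem_support_iff.2 hcoeff)))⟩

lemma finite_leadingExponents_degreePart [CommRing R] [Finite σ] (I : Ideal (MvPolynomial σ R))
    (d : ℕ) :
    (leadingExponents m (degreePart I d)).Finite := by
  refine (Finsupp.finite_of_degree_eq d).subset ?_
  rintro _ ⟨f, hf, hf0, rfl⟩
  exact ((mem_degreePart.1 hf).2.degree_eq_sum_deg_support (m.degree_mem_support hf0)).symm

end LeadingExponents

section InitialIdeals

open scoped MonomialOrder

attribute [local instance] MvPolynomial.gradedAlgebra

lemma finrank_restrictSupport {σ R : Type*} [CommRing R] [Nontrivial R] (P : Set (σ →₀ ℕ)) :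
    Module.finrank R (restrictSupport R P) = P.ncard := by
  rw [Module.finrank_eq_nat_card_basis (basisRestrictSupport R P), Nat.card_coe_set_eq]

variable {K n} {m : MonomialOrder (Fin n)}

lemma mem_initialIdealO {I : Ideal (PS K n)} {f : PS K n} :
    f ∈ initialIdealO K n (· ≺[m] ·) I ↔
      (f.support : Set (Fin n →₀ ℕ)) ⊆ leadingExponents m I := by
  have hgen : initialIdealO K n (· ≺[m] ·) I = Ideal.span
      ((fun e ↦ monomial e (1 : K)) '' leadingExponents m I) := by
    refine congrArg Ideal.span (Set.ext fun h ↦ ⟨?_, ?_⟩)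
    · rintro ⟨f, hf, e, he, hmax, rfl⟩
      have hf0 : f ≠ 0 := support_nonempty.1 ⟨e, he⟩
      have hdeg : m.degree f = e :=
        (hmax _ (m.degree_mem_support hf0)).resolve_right (m.le_degree he).not_gt
      exact ⟨e, ⟨f, hf, hf0, hdeg⟩, rfl⟩
    · rintro ⟨_, ⟨f, hf, hf0, rfl⟩, rfl⟩
      refine ⟨f, hf, _, m.degree_mem_support hf0, fun e he ↦ ?_, rfl⟩
      exact (m.le_degree he).eq_or_lt.imp_left (m.toSyn.injective ·)
  rw [hgen, mem_ideal_span_monomial_image]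
  exact forall₂_congr fun e _ ↦
    ⟨fun ⟨_, hd, hde⟩ ↦ isUpperSet_leadingExponents I hde hd, fun he ↦ ⟨e, he, le_rfl⟩⟩

lemma degreePart_initialIdealO {I : Ideal (PS K n)}
    (hI : I.IsHomogeneous (homogeneousSubmodule (Fin n) K)) (d : ℕ) :
    degreePart (initialIdealO K n (· ≺[m] ·) I) d =
      restrictSupport K (leadingExponents m (degreePart I d)) := by
  have mem_forms {f : PS K n} :
      f.IsHomogeneous d ↔ (f.support : Set (Fin n →₀ ℕ)) ⊆ {e | e.degree = d} := by
    rw [← mem_homogeneousSubmodule, homogeneousSubmodule_eq_finsupp_supported]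
    rfl
  ext f
  rw [mem_degreePart, mem_initialIdealO, mem_forms, leadingExponents_degreePart hI,
    mem_restrictSupport_iff, Set.subset_inter_iff]

end InitialIdeals

section Specialization

attribute [local instance] MvPolynomial.gradedAlgebra

variable {σ R S k : Type*} [CommRing R] [CommRing S] [Field k]

lemma exists_lift_linearMap {φ : R →+* S} (hφ : Function.Surjective φ)
    (l : MvPolynomial σ S →ₗ[S] S) :
    ∃ L : MvPolynomial σ R →ₗ[R] R, ∀ f, φ (L f) = l (map φ f) := by
  refine ⟨(basisMonomials σ R).constr R fun e ↦ Function.surjInv hφ (l (monomial e 1)), fun f ↦ ?_⟩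
  induction f using MvPolynomial.induction_on' with
  | monomial e c =>
    have hc : monomial e c = c • basisMonomials σ R e := by
      rw [coe_basisMonomials, smul_monomial, smul_eq_mul, mul_one]
    have hφc : monomial e (φ c) = φ c • monomial e 1 := by
      rw [smul_monomial, smul_eq_mul, mul_one]
    rw [map_monomial, hφc, l.map_smul, hc, LinearMap.map_smul, Module.Basis.constr_basis,
      smul_eq_mul, smul_eq_mul, map_mul, Function.surjInv_eq hφ]
  | add f g hf hg => simp only [map_add, hf, hg]

lemma linearIndependent_of_map [IsDomain R] {φ : R →+* k} (hφ : Function.Surjective φ) {ι : Type*}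
    [Finite ι] {v : ι → MvPolynomial σ R} (hv : LinearIndependent k fun i ↦ map φ (v i)) :
    LinearIndependent R v := by
  classical
  have := Fintype.ofFinite ι
  -- Functionals dual to the specialised family lift to `R`, and the matrix of the values of the
  -- lifts on `v` specialises to the identity.
  obtain ⟨coords, hcoords⟩ :=
    (Finsupp.linearCombination k fun i ↦ map φ (v i)).exists_leftInverse_of_injective
      (LinearMap.ker_eq_bot.2 hv)
  choose L hL using fun i ↦ exists_lift_linearMap hφ (Finsupp.lapply i ∘ₗ coords)
  let N : Matrix ι ι R := .of fun i j ↦ L j (v i)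
  have hN : φ.mapMatrix N = 1 := by
    ext i j
    have hdual : coords (map φ (v i)) = Finsupp.single i 1 := by
      simpa using LinearMap.congr_fun hcoords (Finsupp.single i 1)
    calc φ (L j (v i)) = coords (map φ (v i)) j := hL j (v i)
      _ = (1 : Matrix ι ι k) i j := by rw [hdual, Finsupp.single_apply, Matrix.one_apply]
  have hdet : N.det ≠ 0 := by
    refine ne_of_apply_ne φ ?_
    rw [RingHom.map_det, hN, Matrix.det_one, map_zero]
    exact one_ne_zero
  exact .of_comp (LinearMap.pi L) (Matrix.linearIndependent_rows_of_det_ne_zero hdet)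

lemma exists_mem_degreePart_map_eq {φ : R →+* S} (hφ : Function.Surjective φ)
    {I : Ideal (MvPolynomial σ R)} (hI : I.IsHomogeneous (homogeneousSubmodule σ R)) {d : ℕ}
    {f : MvPolynomial σ S} (hf : f ∈ degreePart (I.map (map φ)) d) :
    ∃ F ∈ degreePart I d, map φ F = f := by
  obtain ⟨F, hF, rfl⟩ := (Ideal.mem_map_iff_of_surjective _ (map_surjective φ hφ)).1 hf.1
  refine ⟨_, homogeneousComponent_mem_degreePart hI hF d, ?_⟩
  ext e
  have he := congrArg (coeff e) (homogeneousComponent_eq_self hf.2)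
  rw [coeff_homogeneousComponent] at he
  rw [← he, coeff_map, coeff_map, coeff_homogeneousComponent, apply_ite φ, map_zero]

lemma degree_map_of_leadingCoeff_ne_zero {m : MonomialOrder σ} {φ : R →+* S}
    {f : MvPolynomial σ R} (hf : φ (m.leadingCoeff f) ≠ 0) :
    map φ f ≠ 0 ∧ m.degree (map φ f) = m.degree f := by
  have hcoeff : coeff (m.degree f) (map φ f) ≠ 0 := by rwa [coeff_map]
  refine ⟨ne_zero_iff.2 ⟨_, hcoeff⟩, m.toSyn.injective (le_antisymm ?_ ?_)⟩
  · exact m.degree_le_iff.2 fun e he ↦ m.le_degree (support_map_subset φ f he)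
  · exact m.le_degree (mem_support_iff.2 hcoeff)

variable [IsDomain R]

lemma exists_leadingExponents_subset_leadingExponents_map [IsDomain S] [Finite σ]
    (m : MonomialOrder σ) (I : Ideal (MvPolynomial σ R)) :
    ∃ F : R, F ≠ 0 ∧ ∀ φ : R →+* S, φ F ≠ 0 →
      leadingExponents m I ⊆
        leadingExponents m (I.map (map φ)) := by
  set P := leadingExponents m I
  have hfin : {e | Minimal (· ∈ P) e}.Finite :=
    WellQuasiOrderedLE.finite_of_isAntichain (setOfPred_minimal_antichain _)
  choose! f hfI hf0 hfe using fun e (he : e ∈ P) ↦ he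
  refine ⟨∏ e ∈ hfin.toFinset, m.leadingCoeff (f e), ?_, fun φ hφ e he ↦ ?_⟩
  · refine Finset.prod_ne_zero_iff.2 fun e he ↦ m.leadingCoeff_ne_zero_iff.2 (hf0 e ?_)
    exact (hfin.mem_toFinset.1 he).prop
  · obtain ⟨e₀, hle, hmin⟩ := exists_minimal_le_of_wellFoundedLT (· ∈ P) e he
    have hlead : φ (m.leadingCoeff (f e₀)) ≠ 0 :=
      Finset.prod_ne_zero_iff.1 (map_prod φ _ _ ▸ hφ) e₀ (hfin.mem_toFinset.2 hmin)
    obtain ⟨hmap0, hdeg⟩ := degree_map_of_leadingCoeff_ne_zero hlead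
    exact isUpperSet_leadingExponents _ hle
      ⟨_, Ideal.mem_map_of_mem _ (hfI e₀ hmin.prop), hmap0, hdeg.trans (hfe e₀ hmin.prop)⟩

lemma exists_finrank_degreePart_map_le [Finite σ] {I : Ideal (MvPolynomial σ R)}
    (hI : I.IsHomogeneous (homogeneousSubmodule σ R)) :
    ∃ F : R, F ≠ 0 ∧ ∀ φ ψ : R →+* k, Function.Surjective ψ → φ F ≠ 0 → ∀ d,
      Module.finrank k (degreePart (I.map (map ψ)) d) ≤
        Module.finrank k (degreePart (I.map (map φ)) d) := by
  let : LinearOrder σ := IsWellOrder.linearOrder WellOrderingRel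
  let m : MonomialOrder σ := MonomialOrder.lex
  obtain ⟨F, hF, hsub⟩ := exists_leadingExponents_subset_leadingExponents_map (S := k) m I
  refine ⟨F, hF, fun φ ψ hψ hφF d ↦ ?_⟩
  let b := Module.finBasis k (degreePart (I.map (map ψ)) d)
  choose v hv hvb using fun i ↦ exists_mem_degreePart_map_eq hψ hI (b i).2
  have hv_indep : LinearIndependent R v := linearIndependent_of_map hψ (by
    simp only [hvb]
    exact b.linearIndependent.map' (Submodule.subtype _) (Submodule.ker_subtype _))
  have hImap : (I.map (map φ)).IsHomogeneous (homogeneousSubmodule σ k) :=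
    isHomogeneous_map_of_preserves_degree _ (fun _ _ hf ↦ hf.map φ) hI
  calc Module.finrank k (degreePart (I.map (map ψ)) d)
      ≤ (leadingExponents m (degreePart I d)).ncard := by
        simpa using
          card_le_ncard_leadingExponents (finite_leadingExponents_degreePart I d) hv_indep hv
    _ ≤ (leadingExponents m (degreePart (I.map (map φ)) d)).ncard := by
        refine Set.ncard_le_ncard ?_ (finite_leadingExponents_degreePart _ d)
        rw [leadingExponents_degreePart hI, leadingExponents_degreePart hImap]
        exact Set.inter_subset_inter_left _ (hsub φ hφF)
    _ = Module.finrank k (degreePart (I.map (map φ)) d) := ncard_leadingExponents_eq_finrank m _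

end Specialization

section LinearSubstitutions

attribute [local instance] MvPolynomial.gradedAlgebra

variable {σ R S k : Type*} [Fintype σ] [CommRing R] [CommRing S] [Field k]

/-- The linear substitution `x_i ↦ ∑ j, A_{ji} x_j` defined by a square matrix; for `A` invertible
this is the change of coordinates defined by `A`. -/
def linearSubst (A : Matrix σ σ R) : MvPolynomial σ R →ₐ[R] MvPolynomial σ R :=
  aeval fun i ↦ ∑ j, A j i • X j

lemma linearSubst_X (A : Matrix σ σ R) (i : σ) : linearSubst A (X i) = ∑ j, A j i • X j :=
  aeval_X _ i

lemma linearSubst_one [DecidableEq σ] : linearSubst (1 : Matrix σ σ R) = AlgHom.id R _ := by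
  ext1 i
  simp [linearSubst_X, Matrix.one_apply]

lemma linearSubst_mul (A B : Matrix σ σ R) :
    linearSubst (A * B) = (linearSubst A).comp (linearSubst B) := by
  ext1 i
  simp only [linearSubst_X, AlgHom.comp_apply, map_sum, map_smul, Matrix.mul_apply,
    Finset.sum_smul, Finset.smul_sum, smul_smul]
  rw [Finset.sum_comm]
  simp only [mul_comm]

lemma isHomogeneous_linearSubst (A : Matrix σ σ R) (d : ℕ) (f : MvPolynomial σ R)
    (hf : f.IsHomogeneous d) : (linearSubst A f).IsHomogeneous d := by
  have hlinear (i : σ) : (∑ j, A j i • X j : MvPolynomial σ R).IsHomogeneous 1 :=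
    .sum _ _ _ fun j _ ↦ by
      rw [smul_eq_C_mul]
      exact (isHomogeneous_X R j).C_mul (A j i)
  exact one_mul d ▸ hf.aeval _ hlinear

lemma map_linearSubst (φ : R →+* S) (A : Matrix σ σ R) (f : MvPolynomial σ R) :
    map φ (linearSubst A f) = linearSubst (A.map φ) (map φ f) := by
  induction f using MvPolynomial.induction_on with
  | C c => simp only [← algebraMap_eq, AlgHom.commutes]; simp
  | add f g hf hg => simp only [map_add, hf, hg]
  | mul_X f i hf => simp [hf, linearSubst_X, smul_eq_C_mul]

lemma ideal_map_map_linearSubst (φ : R →+* S) (A : Matrix σ σ R) (I : Ideal (MvPolynomial σ R)) :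
    (I.map (linearSubst A)).map (MvPolynomial.map φ) =
      (I.map (MvPolynomial.map φ)).map (linearSubst (A.map φ)) := by
  rw [← Ideal.map_coe (linearSubst A), ← Ideal.map_coe (linearSubst (A.map φ)), Ideal.map_map,
    Ideal.map_map]
  exact congrArg (Ideal.map · I) (RingHom.ext (map_linearSubst φ A))

lemma coeff_linearSubst_diagonal [DecidableEq σ] (t : σ → R) (f : MvPolynomial σ R) (e : σ →₀ ℕ) :
    coeff e (linearSubst (Matrix.diagonal t) f) = eval t (monomial e (coeff e f)) := by
  have linearSubst_X' (i : σ) : linearSubst (Matrix.diagonal t) (X i) = C (t i) * X i := by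
    simp [linearSubst_X, Matrix.diagonal_apply, ite_smul, smul_eq_C_mul]
  induction f using MvPolynomial.induction_on' with
  | monomial d c =>
    have hmon : linearSubst (Matrix.diagonal t) (monomial d c) =
        C (eval t (monomial d c)) * monomial d 1 := by
      rw [eval_monomial, monomial_eq, monomial_eq, C_1, one_mul, map_mul, ← algebraMap_eq,
        AlgHom.commutes, Finsupp.prod, map_prod]
      simp only [map_pow, linearSubst_X', mul_pow, Finset.prod_mul_distrib, algebraMap_eq, map_mul,
        map_prod, mul_assoc, Finsupp.prod]
    rw [hmon, coeff_C_mul, coeff_monomial, coeff_monomial]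
    split_ifs with h <;> simp [h]
  | add f g hf hg => simp only [map_add, coeff_add, hf, hg]

lemma map_linearSubst_mul (A B : Matrix σ σ R) (I : Ideal (MvPolynomial σ R)) :
    I.map (linearSubst (A * B)) = (I.map (linearSubst B)).map (linearSubst A) := by
  rw [linearSubst_mul]
  exact (Ideal.map_mapₐ (I := I) (linearSubst B) (linearSubst A)).symm

lemma map_linearSubst_one [DecidableEq σ] (I : Ideal (MvPolynomial σ R)) :
    I.map (linearSubst 1) = I := by
  rw [linearSubst_one]
  exact Ideal.map_id I

lemma isHomogeneous_map_linearSubst {I : Ideal (MvPolynomial σ R)}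
    (hI : I.IsHomogeneous (homogeneousSubmodule σ R)) (A : Matrix σ σ R) :
    (I.map (linearSubst A)).IsHomogeneous (homogeneousSubmodule σ R) :=
  isHomogeneous_map_of_preserves_degree (linearSubst A) (isHomogeneous_linearSubst A) hI

lemma map_degreePart_le (A : Matrix σ σ R) (I : Ideal (MvPolynomial σ R)) (d : ℕ) :
    (degreePart I d).map (linearSubst A).toLinearMap ≤ degreePart (I.map (linearSubst A)) d := by
  rintro _ ⟨f, hf, rfl⟩
  exact ⟨Ideal.mem_map_of_mem _ hf.1, isHomogeneous_linearSubst A d f hf.2⟩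

/-- The sum of `I` and of the image of `J` under the generic linear substitution, whose
coefficients are the entries of a matrix of indeterminates. -/
def genericSup (I J : Ideal (MvPolynomial σ R)) : Ideal (MvPolynomial σ (MvPolynomial (σ × σ) R)) :=
  I.map (MvPolynomial.map C) ⊔
    (J.map (MvPolynomial.map C)).map (linearSubst (Matrix.mvPolynomialX σ σ R))

lemma isHomogeneous_genericSup {I J : Ideal (MvPolynomial σ R)}
    (hI : I.IsHomogeneous (homogeneousSubmodule σ R))
    (hJ : J.IsHomogeneous (homogeneousSubmodule σ R)) :
    (genericSup I J).IsHomogeneous (homogeneousSubmodule σ (MvPolynomial (σ × σ) R)) := by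
  have map_C {I : Ideal (MvPolynomial σ R)} (hI : I.IsHomogeneous (homogeneousSubmodule σ R)) :=
    isHomogeneous_map_of_preserves_degree
      (MvPolynomial.map C : _ →+* MvPolynomial σ (MvPolynomial (σ × σ) R))
      (fun _ _ hf ↦ hf.map C) hI
  exact (map_C hI).sup (isHomogeneous_map_linearSubst (map_C hJ) _)

lemma map_eval_genericSup (I J : Ideal (MvPolynomial σ R)) (A : Matrix σ σ R) :
    (genericSup I J).map (map (eval fun p ↦ A p.1 p.2)) = I ⊔ J.map (linearSubst A) := by
  classical
  have map_eval_map_C (I : Ideal (MvPolynomial σ R)) :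
      (I.map (MvPolynomial.map C)).map (map (eval fun p : σ × σ ↦ A p.1 p.2)) = I := by
    rw [Ideal.map_map]
    convert Ideal.map_id I
    ext <;> simp
  rw [genericSup, Ideal.map_sup, ideal_map_map_linearSubst, map_eval_map_C, map_eval_map_C,
    ← RingHom.mapMatrix_apply, Matrix.mvPolynomialX_mapMatrix_eval]

lemma exists_finrank_sup_map_linearSubst_le {I J : Ideal (MvPolynomial σ k)}
    (hI : I.IsHomogeneous (homogeneousSubmodule σ k))
    (hJ : J.IsHomogeneous (homogeneousSubmodule σ k)) :
    ∃ F : MvPolynomial (σ × σ) k, F ≠ 0 ∧ ∀ A B : Matrix σ σ k,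
      eval (fun p ↦ A p.1 p.2) F ≠ 0 → ∀ d,
        Module.finrank k (degreePart (I ⊔ J.map (linearSubst B)) d) ≤
          Module.finrank k (degreePart (I ⊔ J.map (linearSubst A)) d) := by
  obtain ⟨F, hF, hle⟩ := exists_finrank_degreePart_map_le (k := k) (isHomogeneous_genericSup hI hJ)
  refine ⟨F, hF, fun A B hA d ↦ ?_⟩
  rw [← map_eval_genericSup, ← map_eval_genericSup]
  exact hle _ _ (fun c ↦ ⟨C c, eval_C c⟩) hA d

variable [DecidableEq σ]

lemma finrank_degreePart_le_map (g : GL σ k) (I : Ideal (MvPolynomial σ k)) (d : ℕ) :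
    Module.finrank k (degreePart I d) ≤
      Module.finrank k (degreePart (I.map (linearSubst (g : Matrix σ σ k))) d) := by
  have hleft : Function.LeftInverse (linearSubst (↑g⁻¹ : Matrix σ σ k))
      (linearSubst (g : Matrix σ σ k)) := by
    intro f
    rw [← AlgHom.comp_apply, ← linearSubst_mul, ← Units.val_mul, inv_mul_cancel, Units.val_one,
      linearSubst_one, AlgHom.id_apply]
  calc Module.finrank k (degreePart I d)
      = Module.finrank k ((degreePart I d).map (linearSubst (g : Matrix σ σ k)).toLinearMap) :=
        (Submodule.equivMapOfInjective _ hleft.injective _).finrank_eq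
    _ ≤ _ := Submodule.finrank_mono (map_degreePart_le _ I d)

end LinearSubstitutions

section GenericTorus

open scoped MonomialOrder

variable {σ ι : Type*}

lemma eq_of_sum_eq_of_le {m : MonomialOrder σ} {s : Finset ι} {a b : ι → σ →₀ ℕ}
    (hle : ∀ i ∈ s, a i ≼[m] b i) (hsum : ∑ i ∈ s, a i = ∑ i ∈ s, b i) :
    ∀ i ∈ s, a i = b i := by
  have hsyn : ∑ i ∈ s, m.toSyn (a i) = ∑ i ∈ s, m.toSyn (b i) := by
    rw [← map_sum, ← map_sum, hsum]
  exact fun i hi ↦ m.toSyn.injective ((Finset.sum_eq_sum_iff_of_le hle).1 hsyn i hi)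

variable [Fintype ι] [DecidableEq ι] {m₁ m₂ : MonomialOrder σ} {s : Finset ι} {e : ι → σ →₀ ℕ}

lemma perm_eq_one_of_le (he : Function.Injective e) {π : Equiv.Perm ι}
    (h₁ : ∀ i ∈ sᶜ, e (π i) ≼[m₁] e i) (h₂ : ∀ i ∈ s, e (π i) ≼[m₂] e i)
    (hsum : ∑ i ∈ s, e (π i) = ∑ i ∈ s, e i) : π = 1 := by
  have hsum_compl : ∑ i ∈ sᶜ, e (π i) = ∑ i ∈ sᶜ, e i := by
    have htotal := Equiv.sum_comp π e
    rw [← s.sum_add_sum_compl, ← s.sum_add_sum_compl, hsum] at htotal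
    exact add_left_cancel htotal
  refine Equiv.ext fun i ↦ he ?_
  by_cases hi : i ∈ s
  · exact eq_of_sum_eq_of_le h₂ hsum i hi
  · exact eq_of_sum_eq_of_le h₁ hsum_compl i (Finset.mem_compl.2 hi)

/-- The matrix of the coefficients at the exponents `e j` of the polynomials `f i`, where the
polynomials with `i ∈ s` are first moved by the generic torus element `x_l ↦ t_l x_l`. The
indeterminates of the entries are the `t_l`. -/
def torusMatrix {R : Type*} [CommRing R] (s : Finset ι) (e : ι → σ →₀ ℕ)
    (f : ι → MvPolynomial σ R) : Matrix ι ι (MvPolynomial σ R) :=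
  .of fun i j ↦ monomial (if i ∈ s then e j else 0) (coeff (e j) (f i))

lemma prod_torusMatrix {R : Type*} [CommRing R] (f : ι → MvPolynomial σ R) (π : Equiv.Perm ι) :
    ∏ i, torusMatrix s e f i (π i) =
      monomial (∑ i ∈ s, e (π i)) (∏ i, coeff (e (π i)) (f i)) := by
  have hexp : ∑ i ∈ s, e (π i) = ∑ i, if i ∈ s then e (π i) else 0 := by
    rw [Finset.sum_ite_mem, Finset.univ_inter]
  rw [hexp, monomial_sum_prod]
  rfl

-- In the Leibniz expansion only the identity permutation contributes to the coefficient at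
-- `∑ i ∈ s, e i`, and its contribution is the product of the leading coefficients.
lemma det_torusMatrix_ne_zero {R : Type*} [CommRing R] [IsDomain R] {f : ι → MvPolynomial σ R}
    (he : Function.Injective e) (hf : ∀ i, f i ≠ 0)
    (h₁ : ∀ i ∈ sᶜ, m₁.degree (f i) = e i) (h₂ : ∀ i ∈ s, m₂.degree (f i) = e i) :
    (torusMatrix s e f).det ≠ 0 := by
  classical
  have hlead (i : ι) : coeff (e i) (f i) ≠ 0 := by
    by_cases hi : i ∈ s
    · exact h₂ i hi ▸ m₂.coeff_degree_ne_zero_iff.2 (hf i)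
    · exact h₁ i (Finset.mem_compl.2 hi) ▸ m₁.coeff_degree_ne_zero_iff.2 (hf i)
  have coeff_prod_eq_zero (π : Equiv.Perm ι) (hπ : π ≠ 1) :
      coeff (∑ i ∈ s, e i) (∏ i, torusMatrix s e f i (π i)) = 0 := by
    rw [prod_torusMatrix, coeff_monomial, ite_eq_right_iff]
    intro hsum
    by_contra hprod
    have hsupp (i : ι) : e (π i) ∈ (f i).support :=
      mem_support_iff.2 (Finset.prod_ne_zero_iff.1 hprod i (Finset.mem_univ i))
    exact hπ (perm_eq_one_of_le he (fun i hi ↦ h₁ i hi ▸ m₁.le_degree (hsupp i))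
      (fun i hi ↦ h₂ i hi ▸ m₂.le_degree (hsupp i)) hsum)
  have hcoeff : coeff (∑ i ∈ s, e i) (torusMatrix s e f).det = ∏ i, coeff (e i) (f i) := by
    rw [← Matrix.det_transpose, Matrix.det_apply, coeff_sum, Finset.sum_eq_single 1]
    · simpa using congrArg (coeff (∑ i ∈ s, e i)) (prod_torusMatrix (s := s) (e := e) f 1)
    · intro π _ hπ
      simp only [Matrix.transpose_apply, Units.smul_def, coeff_smul, coeff_prod_eq_zero π hπ,
        smul_zero]
    · exact fun h ↦ absurd (Finset.mem_univ _) h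
  exact ne_zero_iff.2 ⟨_, hcoeff ▸ Finset.prod_ne_zero_iff.2 fun i _ ↦ hlead i⟩

variable [Fintype σ] [DecidableEq σ]

lemma exists_linearIndependent_torus_translate {R : Type*} [CommRing R] [IsDomain R] [Infinite R]
    {f : ι → MvPolynomial σ R} (he : Function.Injective e) (hf : ∀ i, f i ≠ 0)
    (h₁ : ∀ i ∈ sᶜ, m₁.degree (f i) = e i) (h₂ : ∀ i ∈ s, m₂.degree (f i) = e i) :
    ∃ t : σ → R, LinearIndependent R fun i ↦
      if i ∈ s then linearSubst (Matrix.diagonal t) (f i) else f i := by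
  obtain ⟨t, ht⟩ : ∃ t : σ → R, eval t (torusMatrix s e f).det ≠ 0 := by
    by_contra! hzero
    exact det_torusMatrix_ne_zero he hf h₁ h₂ (MvPolynomial.funext fun t ↦ by simp [hzero])
  refine ⟨t, .of_comp (LinearMap.pi fun j ↦ lcoeff R (e j)) ?_⟩
  have hrows (i j : ι) : (eval t).mapMatrix (torusMatrix s e f) i j =
      coeff (e j) (if i ∈ s then linearSubst (Matrix.diagonal t) (f i) else f i) := by
    by_cases hi : i ∈ s
    · simp [torusMatrix, hi, coeff_linearSubst_diagonal]
    · simp [torusMatrix, hi]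
  rw [RingHom.map_det, Matrix.ext hrows] at ht
  exact Matrix.linearIndependent_rows_of_det_ne_zero ht

lemma exists_ncard_union_leadingExponents_le {k : Type*} [Field k] [Infinite k]
    (m₁ m₂ : MonomialOrder σ) (V W : Submodule k (MvPolynomial σ k))
    [Module.Finite k V] [Module.Finite k W] :
    ∃ t : σ → k, (leadingExponents m₁ V ∪ leadingExponents m₂ W).ncard ≤
      Module.finrank k ↥(V ⊔ W.map (linearSubst (Matrix.diagonal t)).toLinearMap) := by
  classical
  set P := leadingExponents m₁ V
  set Q := leadingExponents m₂ W
  have := ((finite_leadingExponents m₁ V).union (finite_leadingExponents m₂ W)).fintype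
  let s : Finset ↥(P ∪ Q) := {e | e.1 ∉ P}
  have mem_s {e : ↥(P ∪ Q)} : e ∈ s ↔ e.1 ∉ P := by simp [s]
  have exists_leading (e : ↥(P ∪ Q)) : ∃ f : MvPolynomial σ k, f ≠ 0 ∧
      (e ∈ sᶜ → f ∈ V ∧ m₁.degree f = e) ∧ (e ∈ s → f ∈ W ∧ m₂.degree f = e) := by
    by_cases he : e.1 ∈ P
    · obtain ⟨f, hf, hf0, hdeg⟩ := he
      exact ⟨f, hf0, fun _ ↦ ⟨hf, hdeg⟩, fun hes ↦ absurd ⟨f, hf, hf0, hdeg⟩ (mem_s.1 hes)⟩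
    · obtain ⟨f, hf, hf0, hdeg⟩ := e.2.resolve_left he
      exact ⟨f, hf0, fun hes ↦ absurd (mem_s.2 he) (Finset.mem_compl.1 hes), fun _ ↦ ⟨hf, hdeg⟩⟩
  choose f hf0 hfV hfW using exists_leading
  obtain ⟨t, ht⟩ := exists_linearIndependent_torus_translate Subtype.val_injective hf0
    (fun e he ↦ (hfV e he).2) (fun e he ↦ (hfW e he).2)
  refine ⟨t, ?_⟩
  rw [← Nat.card_coe_set_eq, Nat.card_eq_fintype_card, ← finrank_span_eq_card ht]
  refine Submodule.finrank_mono (Submodule.span_le.2 (Set.range_subset_iff.2 fun e ↦ ?_))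
  split_ifs with he
  · exact Submodule.mem_sup_right (Submodule.mem_map_of_mem (hfW e he).1)
  · exact Submodule.mem_sup_left (hfV e (Finset.mem_compl.2 he)).1

end GenericTorus

section GeneralIntersection

attribute [local instance] MvPolynomial.gradedAlgebra

variable {σ k : Type*} [Fintype σ] [DecidableEq σ] [Field k] {m₁ m₂ : MonomialOrder σ}
  {I J : Ideal (MvPolynomial σ k)}

lemma exists_ncard_union_leadingExponents_le_sup_map [Infinite k] (m₁ m₂ : MonomialOrder σ)
    (I J : Ideal (MvPolynomial σ k)) (g₁ g₂ : GL σ k) (d : ℕ) :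
    ∃ B : Matrix σ σ k,
      (leadingExponents m₁ (degreePart (I.map (linearSubst ↑g₁)) d) ∪
        leadingExponents m₂ (degreePart (J.map (linearSubst ↑g₂)) d)).ncard ≤
      Module.finrank k (degreePart (I ⊔ J.map (linearSubst B)) d) := by
  obtain ⟨t, ht⟩ := exists_ncard_union_leadingExponents_le m₁ m₂
    (degreePart (I.map (linearSubst ↑g₁)) d) (degreePart (J.map (linearSubst ↑g₂)) d)
  let T := Matrix.diagonal t
  set A := I.map (linearSubst g₁.1) with hA
  set B := J.map (linearSubst g₂.1) with hB
  refine ⟨g₁⁻¹.1 * T * g₂.1, ?_⟩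
  calc _ ≤ Module.finrank k ↥(degreePart A d ⊔
        (degreePart B d).map (linearSubst T).toLinearMap) := ht
    _ ≤ Module.finrank k (degreePart (A ⊔ B.map (linearSubst T)) d) :=
      Submodule.finrank_mono (sup_le (degreePart_mono le_sup_left d)
        ((map_degreePart_le T B d).trans (degreePart_mono le_sup_right d)))
    _ ≤ Module.finrank k (degreePart ((A ⊔ B.map (linearSubst T)).map (linearSubst g₁⁻¹.1)) d) :=
      finrank_degreePart_le_map g₁⁻¹ _ d
    _ = Module.finrank k (degreePart (I ⊔ J.map (linearSubst (g₁⁻¹.1 * T * g₂.1))) d) := by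
      rw [Ideal.map_sup, hA, hB, ← map_linearSubst_mul, ← map_linearSubst_mul,
        ← map_linearSubst_mul, ← Units.val_mul, inv_mul_cancel, Units.val_one, map_linearSubst_one]

lemma finrank_degreePart_le_ncard_leadingExponents (m : MonomialOrder σ)
    (I : Ideal (MvPolynomial σ k)) (g₁ g₂ : GL σ k) (d : ℕ) :
    Module.finrank k (degreePart (I.map (linearSubst ↑g₁)) d) ≤
      (leadingExponents m (degreePart (I.map (linearSubst ↑g₂)) d)).ncard :=
  calc Module.finrank k (degreePart (I.map (linearSubst ↑g₁)) d)
      ≤ Module.finrank k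
          (degreePart ((I.map (linearSubst ↑g₁)).map (linearSubst ↑(g₂ * g₁⁻¹))) d) :=
        finrank_degreePart_le_map (g₂ * g₁⁻¹) _ d
    _ = Module.finrank k (degreePart (I.map (linearSubst ↑g₂)) d) := by
      rw [← map_linearSubst_mul, ← Units.val_mul, inv_mul_cancel_right]
    _ = (leadingExponents m (degreePart (I.map (linearSubst ↑g₂)) d)).ncard :=
      (ncard_leadingExponents_eq_finrank m _).symm

lemma finrank_degreePart_inf_le_ncard_inter
    (hI : I.IsHomogeneous (homogeneousSubmodule σ k))
    (hJ : J.IsHomogeneous (homogeneousSubmodule σ k)) (g g₁ g₂ : GL σ k) (d : ℕ)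
    (hunion : (leadingExponents m₁ (degreePart (I.map (linearSubst ↑g₁)) d) ∪
        leadingExponents m₂ (degreePart (J.map (linearSubst ↑g₂)) d)).ncard ≤
      Module.finrank k (degreePart (I ⊔ J.map (linearSubst ↑g)) d)) :
    Module.finrank k (degreePart (I ⊓ J.map (linearSubst ↑g)) d) ≤
      (leadingExponents m₁ (degreePart (I.map (linearSubst ↑g₁)) d) ∩
        leadingExponents m₂ (degreePart (J.map (linearSubst ↑g₂)) d)).ncard := by
  have hdim := Submodule.finrank_sup_add_finrank_inf_eq
    (degreePart I d) (degreePart (J.map (linearSubst ↑g)) d)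
  rw [← degreePart_sup hI (isHomogeneous_map_linearSubst hJ _), ← degreePart_inf] at hdim
  have hcard := Set.ncard_union_add_ncard_inter
    (leadingExponents m₁ (degreePart (I.map (linearSubst ↑g₁)) d))
    (leadingExponents m₂ (degreePart (J.map (linearSubst ↑g₂)) d))
    (finite_leadingExponents m₁ _) (finite_leadingExponents m₂ _)
  have hI_le := (finrank_degreePart_le_map g₁ I d).trans_eq
    (ncard_leadingExponents_eq_finrank m₁ _).symm
  have hJ_le := finrank_degreePart_le_ncard_leadingExponents m₂ J g g₂ d
  omega

lemma exists_finrank_degreePart_inf_le_ncard_inter [Infinite k] (m₁ m₂ : MonomialOrder σ)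
    (hI : I.IsHomogeneous (homogeneousSubmodule σ k))
    (hJ : J.IsHomogeneous (homogeneousSubmodule σ k)) :
    ∃ F : MvPolynomial (σ × σ) k, F ≠ 0 ∧ ∀ g : GL σ k,
      eval (fun p ↦ (g : Matrix σ σ k) p.1 p.2) F ≠ 0 → ∀ (g₁ g₂ : GL σ k) (d : ℕ),
        Module.finrank k (degreePart (I ⊓ J.map (linearSubst ↑g)) d) ≤
          (leadingExponents m₁ (degreePart (I.map (linearSubst ↑g₁)) d) ∩
            leadingExponents m₂ (degreePart (J.map (linearSubst ↑g₂)) d)).ncard := by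
  obtain ⟨F, hF, hmax⟩ := exists_finrank_sup_map_linearSubst_le hI hJ
  refine ⟨F, hF, fun g hg g₁ g₂ d ↦ ?_⟩
  obtain ⟨B, hB⟩ := exists_ncard_union_leadingExponents_le_sup_map m₁ m₂ I J g₁ g₂ d
  exact finrank_degreePart_inf_le_ncard_inter hI hJ g g₁ g₂ d (hB.trans (hmax g B hg d))

end GeneralIntersection

section Gins

open scoped MonomialOrder

attribute [local instance] MvPolynomial.gradedAlgebra

lemma lexLt_eq : lexLt n = (· ≺[MonomialOrder.lex] ·) :=
  funext₂ fun _ _ ↦ propext MonomialOrder.lex_lt_iff.symm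

/-- The lexicographic monomial order induced by `x_n > ⋯ > x_1`: Mathlib's `MonomialOrder.lex`,
whose first variable is the largest one, for the reversed order of the variables. -/
def oplexOrder : MonomialOrder (Fin n) :=
  @MonomialOrder.lex (Fin n) (inferInstanceAs (LinearOrder (Fin n)ᵒᵈ))
    (inferInstanceAs (WellFoundedGT (Fin n)ᵒᵈ))

lemma oplexLt_eq : oplexLt n = (· ≺[oplexOrder n] ·) :=
  funext₂ fun _ _ ↦ propext (@MonomialOrder.lex_lt_iff (Fin n)
    (inferInstanceAs (LinearOrder (Fin n)ᵒᵈ)) (inferInstanceAs (WellFoundedGT (Fin n)ᵒᵈ)) _ _).symm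

variable {K n}

lemma IsHomog.isHomogeneous {I : Ideal (PS K n)} (hI : IsHomog K n I) :
    I.IsHomogeneous (homogeneousSubmodule (Fin n) K) := fun d f hf ↦ by
  simpa only [← DirectSum.Decomposition.decompose'_eq, decomposition.decompose'_apply]
    using hI f hf d

lemma generally.exists [Infinite K] {P : GL (Fin n) K → Prop} (hP : generally K n P) :
    ∃ g, P g := by
  obtain ⟨F, hF, hFP⟩ := hP
  by_contra! hnot
  exact hF (eq_of_eval_eq_on_gl fun g ↦ by simpa using mt (hFP g) (hnot g))

lemma hilb_initialIdealO_inf {m₁ m₂ : MonomialOrder (Fin n)} {I J : Ideal (PS K n)}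
    (hI : I.IsHomogeneous (homogeneousSubmodule (Fin n) K))
    (hJ : J.IsHomogeneous (homogeneousSubmodule (Fin n) K)) (d : ℕ) :
    hilb K n (initialIdealO K n (· ≺[m₁] ·) I ⊓ initialIdealO K n (· ≺[m₂] ·) J) d =
      (leadingExponents m₁ (degreePart I d) ∩ leadingExponents m₂ (degreePart J d)).ncard := by
  have hinf (P Q : Set (Fin n →₀ ℕ)) :
      restrictSupport K P ⊓ restrictSupport K Q = restrictSupport K (P ∩ Q) :=
    SetLike.ext fun f ↦ by simp only [Submodule.mem_inf, mem_restrictSupport_iff,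
      Set.subset_inter_iff]
  rw [← finrank_restrictSupport (R := K), ← hinf, ← degreePart_initialIdealO hI,
    ← degreePart_initialIdealO hJ, ← degreePart_inf]
  rfl

lemma generally_hilb_inf_map_le_initialIdealO [Infinite K] (m₁ m₂ : MonomialOrder (Fin n))
    {I J : Ideal (PS K n)} (hI : IsHomog K n I) (hJ : IsHomog K n J) :
    generally K n fun g ↦ ∀ (g₁ g₂ : GL (Fin n) K) (d : ℕ),
      hilb K n (I ⊓ J.map (coordChange K n g)) d ≤
        hilb K n (initialIdealO K n (· ≺[m₁] ·) (I.map (coordChange K n g₁)) ⊓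
          initialIdealO K n (· ≺[m₂] ·) (J.map (coordChange K n g₂))) d := by
  have hI := hI.isHomogeneous
  have hJ := hJ.isHomogeneous
  obtain ⟨F, hF, hle⟩ := exists_finrank_degreePart_inf_le_ncard_inter m₁ m₂ hI hJ
  refine ⟨F, hF, fun g hg g₁ g₂ d ↦ (hle g hg g₁ g₂ d).trans_eq ?_⟩
  exact (hilb_initialIdealO_inf (isHomogeneous_map_linearSubst hI g₁.1)
    (isHomogeneous_map_linearSubst hJ g₂.1) d).symm

theorem hilb_general_intersection_le_gins_general [Infinite K] (m₁ m₂ : MonomialOrder (Fin n))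
    {I J : Ideal (PS K n)} (hI : IsHomog K n I) (hJ : IsHomog K n J) {GinI GinJ : Ideal (PS K n)}
    (hGinI : generally K n fun g ↦
      initialIdealO K n (· ≺[m₁] ·) (I.map (coordChange K n g)) = GinI)
    (hGinJ : generally K n fun g ↦
      initialIdealO K n (· ≺[m₂] ·) (J.map (coordChange K n g)) = GinJ) :
    generally K n fun g ↦ ∀ d : ℕ,
      hilb K n (I ⊓ J.map (coordChange K n g)) d ≤ hilb K n (GinI ⊓ GinJ) d := by
  obtain ⟨g₁, rfl⟩ := hGinI.exists
  obtain ⟨g₂, rfl⟩ := hGinJ.exists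
  obtain ⟨F, hF, hle⟩ := generally_hilb_inf_map_le_initialIdealO m₁ m₂ hI hJ
  exact ⟨F, hF, fun g hg ↦ hle g hg g₁ g₂⟩

end Gins

/-- **Corollary 2.9(i)** (Caviglia–Murai): for homogeneous ideals `I, J ⊆ S` and a general
change of coordinates `g ∈ GL_n(K)`,
`H(I ∩ g(J), d) ≤ H(Gin_lex(I) ∩ Gin_oplex(J), d)` for all `d ≥ 0`. -/
theorem hilb_general_intersection_le_gins [Infinite K]
    (I J : Ideal (PS K n)) (hI : IsHomog K n I) (hJ : IsHomog K n J)
    (GinI : Ideal (PS K n))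
    (hGinI : generally K n (fun g =>
      initialIdealO K n (lexLt n) (Ideal.map (coordChange K n g) I) = GinI))
    (GinJ : Ideal (PS K n))
    (hGinJ : generally K n (fun g =>
      initialIdealO K n (oplexLt n) (Ideal.map (coordChange K n g) J) = GinJ))
 :
    generally K n (fun g => ∀ d : ℕ,
      hilb K n (I ⊓ Ideal.map (coordChange K n g) J) d ≤ hilb K n (GinI ⊓ GinJ) d) := by
  rw [lexLt_eq] at hGinI
  rw [oplexLt_eq] at hGinJ
  exact hilb_general_intersection_le_gins_general .lex (oplexOrder n) hI hJ hGinI hGinJ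

end
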